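/- arXiv:1302.0271 — 3 statements merged into one kernel-verified Lean document; each statement's English description precedes it below -/
import Mathlib

section
/- Let k ≥ 1 be an integer, α = (1+√(1+4/k))/2, β = kα+1, a_n = ⌊nα⌋, b_n = ⌊nβ⌋, and S̄_k = {(x,y) ∈ ℕ² : ∃ n ∈ ℕ, {x,y} = {a_n,b_n}}. Then no legal move of the ruleset Γ_k leads from a position in S̄_k to a position in S̄_k. -/
/-- α = (1 + √(1 + 4/k)) / 2 -/
noncomputable def alphaK (k : ℕ) : ℝ := (1 + Real.sqrt (1 + 4 / (k : ℝ))) / 2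

/-- β = k·α + 1 -/
noncomputable def betaK (k : ℕ) : ℝ := (k : ℝ) * alphaK k + 1

/-- a_n = ⌊n·α⌋ -/
noncomputable def aSeq (k n : ℕ) : ℤ := ⌊(n : ℝ) * alphaK k⌋

/-- b_n = ⌊n·β⌋ -/
noncomputable def bSeq (k n : ℕ) : ℤ := ⌊(n : ℝ) * betaK k⌋

/-- the pair (f^i_n, g^i_n): (f^i_0,g^i_0) = (0,i+1),
    (f^i_n, g^i_n) = (f^i_{n−1} + g^i_{n−1}, k·f^i_{n−1} + (k+1)·g^i_{n−1} + i). -/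
def fg (k i : ℕ) : ℕ → ℕ × ℕ
  | 0 => (0, i + 1)
  | n + 1 => ((fg k i n).1 + (fg k i n).2,
      k * (fg k i n).1 + (k + 1) * (fg k i n).2 + i)

/-- The moves of the ruleset Γ_k, from position `p` to position `q`
    (positions are pairs of natural numbers, so nonnegativity of the
    resulting coordinates is automatic from the additive formulation). -/
def GammaMove (k : ℕ) (p q : ℕ × ℕ) : Prop :=
  -- Type I: Nim moves
  (∃ n : ℕ, 1 ≤ n ∧
      ((q.1 + n = p.1 ∧ q.2 = p.2) ∨ (q.1 = p.1 ∧ q.2 + n = p.2))) ∨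
  -- Type II: extended diagonal moves, s,t ≥ 1 with |s−t| < k
  (∃ s t : ℕ, 1 ≤ s ∧ 1 ≤ t ∧ s < t + k ∧ t < s + k ∧
      ((q.1 + s = p.1 ∧ q.2 + t = p.2) ∨ (q.1 + t = p.1 ∧ q.2 + s = p.2))) ∨
  -- Type III: extra moves (f^i_n, g^i_n − 1) for 1 ≤ i ≤ k−1, n ≥ 1
  (∃ i n : ℕ, 1 ≤ i ∧ i + 1 ≤ k ∧ 1 ≤ n ∧
      ((q.1 + (fg k i n).1 = p.1 ∧ q.2 + ((fg k i n).2 - 1) = p.2) ∨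
       (q.1 + ((fg k i n).2 - 1) = p.1 ∧ q.2 + (fg k i n).1 = p.2)))

/-- S̄_k = {(x,y) : ∃ n, {x,y} = {a_n, b_n}} -/
def SbarK (k : ℕ) : Set (ℕ × ℕ) :=
  {p | ∃ n : ℕ, ((p.1 : ℤ) = aSeq k n ∧ (p.2 : ℤ) = bSeq k n) ∨
                ((p.1 : ℤ) = bSeq k n ∧ (p.2 : ℤ) = aSeq k n)}

/-!
For an integer position `(x, y)`, consider the deviation `y - kαx` from the line of slope
`kα = β / α` through the origin. With `u = k · fract (nα)`, the deviation of `(a_n, b_n)` is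
`⌊u⌋ + (α - 1)u`, because `kα² = kα + 1`. Two values of `u ↦ ⌊u⌋ + (α - 1)u` never differ by an
amount strictly between `iα - 1` and `i`. On the other hand, the recurrence defining
`(f^i_n, g^i_n)` contracts the deviation towards its fixed point `iα`, so for `n ≥ 1` the deviation
of `(f^i_n, g^i_n - 1)` does lie strictly between `iα - 1` and `i`.

The remaining moves are excluded because `n ↦ b_n - a_n` grows by at least `k` at each step, so two
positions `(a_m, b_m)` and `(a_l, b_l)`, the second one possibly reflected, differ by an amount
`(s, t)` with `1 ≤ s` and `s + k ≤ t` whenever the second one lies below the first.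
-/

section Floor

variable {R : Type*} [CommRing R] [LinearOrder R] [IsStrictOrderedRing R] [FloorRing R]

theorem monotone_floor_natCast_mul_sub_floor {k : ℕ} (hk : 1 ≤ k) :
    Monotone fun t : R ↦ ⌊(k : R) * t⌋ - ⌊t⌋ := by
  intro s t hst
  have hfloor : ⌊(k : R) * s⌋ ≤ ⌊(k : R) * t⌋ := by gcongr
  have hdiv_cancel (r : R) : ⌊r⌋ = ⌊(k : R) * r⌋ / k :=
    (Int.natCast_mul_floor_div_cancel (Nat.one_le_iff_ne_zero.mp hk) r).symm
  change ⌊(k : R) * s⌋ - ⌊s⌋ ≤ ⌊(k : R) * t⌋ - ⌊t⌋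
  rw [hdiv_cancel s, hdiv_cancel t]
  generalize ⌊(k : R) * s⌋ = M at *
  generalize ⌊(k : R) * t⌋ = N at *
  have hdiv : N / k ≤ M / k + (N - M) := calc
    N / k ≤ (M + (N - M) * k) / k := Int.ediv_le_ediv (by positivity) (by nlinarith)
    _ = M / k + (N - M) := Int.add_mul_ediv_right _ _ (by positivity)
  linarith

theorem floor_add_mul_sub_floor_add_mul_notMem_Ioo {c : R} (hc : 0 ≤ c) {i : ℤ} (hi : 1 ≤ i)
    (u v : R) : ⌊u⌋ + c * u - (⌊v⌋ + c * v) ∉ Set.Ioo (i + c * i - 1) (i : R) := by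
  rintro ⟨hlower, hupper⟩
  have hu := Int.floor_le u
  have hu' := Int.lt_floor_add_one u
  have hv := Int.floor_le v
  have hv' := Int.lt_floor_add_one v
  rcases le_or_gt i (⌊u⌋ - ⌊v⌋) with hle | hlt
  · have hle' : (i : R) ≤ ⌊u⌋ - ⌊v⌋ := mod_cast hle
    have hi' : (1 : R) ≤ i := mod_cast hi
    have hvu : c * v ≤ c * u := by gcongr; linarith
    linarith
  · have hlt' : (⌊u⌋ : R) - ⌊v⌋ + 1 ≤ i := mod_cast Int.add_one_le_of_lt hlt
    have huv : c * (u - v) ≤ c * i := by gcongr; linarith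
    linarith

end Floor

variable {k : ℕ}

theorem mul_alphaK_sq (hk : 1 ≤ k) : (k : ℝ) * alphaK k ^ 2 = k * alphaK k + 1 := by
  have hk₀ : (k : ℝ) ≠ 0 := by positivity
  have hsq : √(1 + 4 / (k : ℝ)) ^ 2 = 1 + 4 / k := Real.sq_sqrt (by positivity)
  have hmul : (k : ℝ) * √(1 + 4 / (k : ℝ)) ^ 2 = k + 4 := by rw [hsq]; field_simp
  unfold alphaK
  linear_combination hmul / 4

theorem one_lt_alphaK (hk : 1 ≤ k) : 1 < alphaK k := by
  have hsqrt : 1 < √(1 + 4 / (k : ℝ)) := by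
    rw [Real.lt_sqrt zero_le_one, one_pow]
    exact lt_add_of_pos_right 1 (by positivity)
  unfold alphaK
  linarith

theorem mul_alphaK_sub_one_lt_one (hk : 1 ≤ k) : (k : ℝ) * (alphaK k - 1) < 1 := by
  have hα := one_lt_alphaK hk
  have hprod : (k : ℝ) * (alphaK k - 1) * alphaK k = 1 := by
    linear_combination mul_alphaK_sq hk
  nlinarith

theorem irrational_alphaK (hk : 1 ≤ k) : Irrational (alphaK k) := by
  have hnot_sq : ¬IsSquare (k ^ 2 + 4 * k) := by
    rintro ⟨r, hr⟩
    exact Nat.not_exists_sq (m := k + 1) (by nlinarith) (by nlinarith) ⟨r, hr.symm⟩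
  have hsqrt : √((k ^ 2 + 4 * k : ℕ) : ℝ) = k * (2 * alphaK k - 1) := by
    have hα := one_lt_alphaK hk
    refine (Real.sqrt_eq_iff_mul_self_eq_of_pos (mul_pos (by positivity) (by linarith))).mpr ?_
    push_cast
    linear_combination 4 * (k : ℝ) * mul_alphaK_sq hk
  rintro ⟨x, hx⟩
  refine irrational_sqrt_natCast_iff.mpr hnot_sq ⟨k * (2 * x - 1), ?_⟩
  rw [hsqrt, ← hx]
  push_cast
  rfl

theorem holderConjugate_alphaK_betaK (hk : 1 ≤ k) : (alphaK k).HolderConjugate (betaK k) := by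
  have hα := one_lt_alphaK hk
  have hα₀ : alphaK k ≠ 0 := by positivity
  refine Real.holderConjugate_iff.mpr ⟨hα, ?_⟩
  unfold betaK
  field_simp
  linear_combination -mul_alphaK_sq hk

theorem aSeq_strictMono (hk : 1 ≤ k) : StrictMono (aSeq k) := by
  refine strictMono_nat_of_lt_succ fun n ↦ Int.add_one_le_iff.mp ?_
  rw [aSeq, ← Int.floor_add_one]
  refine Int.floor_le_floor ?_
  push_cast
  linarith [one_lt_alphaK hk]

theorem aSeq_zero : aSeq k 0 = 0 := by simp [aSeq]

theorem bSeq_zero : bSeq k 0 = 0 := by simp [bSeq]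

theorem bSeq_eq_floor_add (n : ℕ) : bSeq k n = ⌊(k : ℝ) * (n * alphaK k)⌋ + n := by
  rw [← Int.floor_add_natCast, bSeq, betaK]
  ring_nf

theorem mul_sub_le_bSeq_sub_aSeq_sub (hk : 1 ≤ k) {l m : ℕ} (hlm : l ≤ m) :
    (k : ℤ) * (m - l) ≤ (bSeq k m - aSeq k m) - (bSeq k l - aSeq k l) := by
  obtain ⟨d, rfl⟩ := Nat.exists_eq_add_of_le hlm
  have hα : (l : ℝ) * alphaK k + d ≤ (l + d : ℕ) * alphaK k := by
    push_cast
    nlinarith [one_lt_alphaK hk, d.cast_nonneg (α := ℝ)]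
  have hshift : (k : ℝ) * (l * alphaK k + d) = k * (l * alphaK k) + (k * d : ℕ) := by
    push_cast
    ring
  have hmono := monotone_floor_natCast_mul_sub_floor hk hα
  simp only [hshift, Int.floor_add_natCast] at hmono
  simp only [bSeq_eq_floor_add, aSeq]
  push_cast at *
  linarith

theorem mul_le_bSeq_sub_aSeq (hk : 1 ≤ k) (n : ℕ) : (k : ℤ) * n ≤ bSeq k n - aSeq k n := by
  simpa [aSeq_zero, bSeq_zero] using mul_sub_le_bSeq_sub_aSeq_sub hk n.zero_le

theorem aSeq_ne_bSeq (hk : 1 ≤ k) {m n : ℕ} (hm : 0 < m) (hn : 0 < n) : aSeq k m ≠ bSeq k n := by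
  intro h
  have hpartition :=
    (irrational_alphaK hk).beattySeq_symmDiff_beattySeq_pos (holderConjugate_alphaK_betaK hk)
  have hpos : 0 < aSeq k m := aSeq_zero (k := k) ▸ aSeq_strictMono hk hm
  obtain ⟨-, hnot⟩ | ⟨-, hnot⟩ := hpartition.ge hpos
  · exact hnot ⟨n, mod_cast hn, by simp [beattySeq, h, bSeq]⟩
  · exact hnot ⟨m, mod_cast hm, by simp [beattySeq, aSeq]⟩

/-- The deviation of the point `(x, y)` from the line `y = kαx` that the positions `(a_n, b_n)`
follow, measured vertically. -/
noncomputable def deviation (k : ℕ) (x y : ℝ) : ℝ := y - k * alphaK k * x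

theorem deviation_sub (x y x' y' : ℝ) :
    deviation k (x - x') (y - y') = deviation k x y - deviation k x' y' := by
  unfold deviation
  ring

theorem deviation_aSeq_bSeq (hk : 1 ≤ k) (n : ℕ) :
    deviation k (aSeq k n) (bSeq k n) = ⌊(k : ℝ) * Int.fract (n * alphaK k)⌋ +
      (alphaK k - 1) * (k * Int.fract (n * alphaK k)) := by
  have hfloor : bSeq k n = k * aSeq k n + ⌊(k : ℝ) * Int.fract (n * alphaK k)⌋ + n := by
    rw [bSeq_eq_floor_add, ← Int.floor_intCast_add, aSeq, Int.fract]
    push_cast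
    ring_nf
  have haSeq : (aSeq k n : ℝ) = n * alphaK k - Int.fract (n * alphaK k) :=
    (Int.self_sub_fract _).symm
  rw [deviation, hfloor]
  push_cast
  rw [haSeq]
  linear_combination -(n : ℝ) * mul_alphaK_sq hk

theorem deviation_aSeq_bSeq_nonneg (hk : 1 ≤ k) (n : ℕ) :
    0 ≤ deviation k (aSeq k n) (bSeq k n) := by
  rw [deviation_aSeq_bSeq hk]
  have hα : 0 ≤ alphaK k - 1 := sub_nonneg.mpr (one_lt_alphaK hk).le
  positivity

theorem deviation_sub_notMem_Ioo (hk : 1 ≤ k) {i : ℕ} (hi : 1 ≤ i) (l m : ℕ) :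
    deviation k (aSeq k m - aSeq k l) (bSeq k m - bSeq k l) ∉
      Set.Ioo (i * alphaK k - 1) (i : ℝ) := by
  have hα : 0 ≤ alphaK k - 1 := sub_nonneg.mpr (one_lt_alphaK hk).le
  have hleft : (i : ℝ) * alphaK k - 1 = (i : ℤ) + (alphaK k - 1) * (i : ℤ) - 1 := by
    push_cast
    ring
  rw [deviation_sub, deviation_aSeq_bSeq hk, deviation_aSeq_bSeq hk, hleft]
  exact floor_add_mul_sub_floor_add_mul_notMem_Ioo hα (mod_cast hi) _ _

theorem le_deviation_sub_swap (hk : 1 ≤ k) {l : ℕ} (hl : 0 < l) (m : ℕ) :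
    (k : ℝ) ≤ deviation k (aSeq k m - bSeq k l) (bSeq k m - aSeq k l) := by
  have hk' : (1 : ℝ) ≤ k := mod_cast hk
  have hl' : (1 : ℝ) ≤ l := mod_cast hl
  have hgap : (k : ℝ) * l ≤ bSeq k l - aSeq k l := mod_cast mul_le_bSeq_sub_aSeq hk l
  have ha : (0 : ℝ) ≤ aSeq k l :=
    mod_cast aSeq_zero (k := k) ▸ (aSeq_strictMono hk).monotone l.zero_le
  have hslope : 1 ≤ k * alphaK k := by nlinarith [one_lt_alphaK hk]
  have hb : (bSeq k l : ℝ) ≤ k * alphaK k * bSeq k l :=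
    le_mul_of_one_le_left (by nlinarith) hslope
  have hneg : deviation k (bSeq k l) (aSeq k l) ≤ -k := by
    unfold deviation
    nlinarith
  rw [deviation_sub]
  linarith [deviation_aSeq_bSeq_nonneg hk m]

theorem deviation_fg (hk : 1 ≤ k) (i n : ℕ) :
    deviation k (fg k i n).1 (fg k i n).2 =
      i * alphaK k + (k + 1 - k * alphaK k) ^ n * (i + 1 - i * alphaK k) := by
  unfold deviation
  induction n with
  | zero => simp [fg]
  | succ n ih =>
    simp only [fg, pow_succ]
    push_cast
    linear_combination (k + 1 - k * alphaK k) * ih -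
      (k * (fg k i n).1 + i : ℝ) * mul_alphaK_sq hk

theorem deviation_fg_mem_Ioo (hk : 1 ≤ k) {i n : ℕ} (hik : i ≤ k) (hn : n ≠ 0) :
    deviation k (fg k i n).1 (fg k i n).2 ∈ Set.Ioo (i * alphaK k) (i + 1 : ℝ) := by
  have hα := one_lt_alphaK hk
  have hk' : (1 : ℝ) ≤ k := mod_cast hk
  have hkα := mul_alphaK_sub_one_lt_one hk
  have hinit : 0 < i + 1 - i * alphaK k := by
    have hik' : (i : ℝ) * (alphaK k - 1) ≤ k * (alphaK k - 1) := by
      gcongr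
    linarith
  have hratio : 0 < k + 1 - k * alphaK k := by linarith
  have hpow : (k + 1 - k * alphaK k) ^ n < 1 := pow_lt_one₀ hratio.le (by nlinarith) hn
  rw [deviation_fg hk]
  constructor
  · exact lt_add_of_pos_right _ (by positivity)
  · linarith [mul_lt_of_lt_one_left hinit hpow]

theorem one_le_fg_snd {i : ℕ} (hi : 1 ≤ i) (n : ℕ) : 1 ≤ (fg k i n).2 := by
  cases n <;> simp only [fg] <;> omega

theorem fg_fst_le_snd (hk : 1 ≤ k) (i n : ℕ) : (fg k i n).1 ≤ (fg k i n).2 := by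
  cases n with
  | zero => exact Nat.zero_le _
  | succ n =>
    simp only [fg]
    nlinarith

theorem one_le_fg_fst {i n : ℕ} (hi : 1 ≤ i) (hn : 1 ≤ n) : 1 ≤ (fg k i n).1 := by
  obtain ⟨n, rfl⟩ := Nat.exists_eq_add_of_le' hn
  exact le_add_left (one_le_fg_snd hi n)

theorem GammaMove.swap {p q : ℕ × ℕ} (h : GammaMove k p q) : GammaMove k p.swap q.swap := by
  simp only [GammaMove, Prod.fst_swap, Prod.snd_swap] at h ⊢
  rcases h with ⟨n, hn, h⟩ | ⟨s, t, hs, ht, hst, hts, h⟩ | ⟨i, n, hi, hik, hn, h⟩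
  · exact .inl ⟨n, hn, h.symm.imp And.symm And.symm⟩
  · exact .inr (.inl ⟨s, t, hs, ht, hst, hts, h.symm.imp And.symm And.symm⟩)
  · exact .inr (.inr ⟨i, n, hi, hik, hn, h.symm.imp And.symm And.symm⟩)

theorem GammaMove.lt {p q : ℕ × ℕ} (h : GammaMove k p q) : q < p := by
  rw [Prod.lt_iff]
  rcases h with ⟨n, hn, h⟩ | ⟨s, t, hs, ht, -, -, h⟩ | ⟨i, n, hi, -, hn, h⟩
  · omega
  · omega
  · have := one_le_fg_fst (k := k) hi hn
    omega

theorem GammaMove.exists_fg {p q : ℕ × ℕ} (h : GammaMove k p q) (hfst : q.1 < p.1)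
    (hsnd : q.2 + p.1 + k ≤ p.2 + q.1) :
    ∃ i n, 1 ≤ i ∧ i < k ∧ 1 ≤ n ∧ q.1 + (fg k i n).1 = p.1 ∧ q.2 + (fg k i n).2 = p.2 + 1 := by
  rcases h with ⟨n, -, h⟩ | ⟨s, t, -, -, hst, hts, h⟩ | ⟨i, n, hi, hik, hn, h⟩
  · omega
  · omega
  · have hg := one_le_fg_snd (k := k) hi n
    have hfg := fg_fst_le_snd (k := k) (by omega) i n
    exact ⟨i, n, hi, hik, hn, by omega, by omega⟩

theorem swap_mem_SbarK {p : ℕ × ℕ} : p.swap ∈ SbarK k ↔ p ∈ SbarK k :=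
  exists_congr fun _ ↦ or_comm.trans (or_congr and_comm and_comm)

theorem fst_lt_and_add_le_of_mem_SbarK (hk : 1 ≤ k) {p q : ℕ × ℕ} {m : ℕ}
    (hp₁ : (p.1 : ℤ) = aSeq k m) (hp₂ : (p.2 : ℤ) = bSeq k m) (hq : q ∈ SbarK k) (hlt : q < p) :
    q.1 < p.1 ∧ q.2 + p.1 + k ≤ p.2 + q.1 := by
  rw [Prod.lt_iff] at hlt
  obtain ⟨l, ⟨hq₁, hq₂⟩ | ⟨hq₁, hq₂⟩⟩ := hq
  · have hlm : l < m := by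
      refine ((aSeq_strictMono hk).le_iff_le.mp (by omega)).lt_of_ne ?_
      rintro rfl
      omega
    have ha := aSeq_strictMono hk hlm
    have hgap := mul_sub_le_bSeq_sub_aSeq_sub hk hlm.le
    have hkm : (k : ℤ) ≤ k * (m - l) := le_mul_of_one_le_right (by positivity) (by omega)
    omega
  · have hgap_m := mul_le_bSeq_sub_aSeq hk m
    have hgap_l := mul_le_bSeq_sub_aSeq hk l
    have ha : aSeq k 0 ≤ aSeq k l := (aSeq_strictMono hk).monotone l.zero_le
    rw [aSeq_zero] at ha
    have hm : 0 < m := by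
      rw [Nat.pos_iff_ne_zero]
      rintro rfl
      rw [aSeq_zero] at hp₁
      rw [bSeq_zero] at hp₂
      omega
    have hne : (q.1 : ℤ) ≠ p.1 := by
      rcases l.eq_zero_or_pos with rfl | hl
      · have := aSeq_zero (k := k) ▸ aSeq_strictMono hk hm
        rw [bSeq_zero] at hq₁
        omega
      · rw [hq₁, hp₁]
        exact (aSeq_ne_bSeq hk hm hl).symm
    have hkl : (0 : ℤ) ≤ k * l := by positivity
    have hkm : (k : ℤ) ≤ k * m := le_mul_of_one_le_right (by positivity) (by omega)
    omega

theorem deviation_sub_notMem_Ioo_of_mem_SbarK {p q : ℕ × ℕ} {m i : ℕ} (hi : 1 ≤ i) (hik : i < k)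
    (hp₁ : (p.1 : ℤ) = aSeq k m) (hp₂ : (p.2 : ℤ) = bSeq k m) (hq : q ∈ SbarK k) :
    deviation k (p.1 - q.1) (p.2 - q.2) ∉ Set.Ioo (i * alphaK k - 1) (i : ℝ) := by
  have hk : 1 ≤ k := by omega
  obtain ⟨l, hl⟩ := hq
  simp only [← Int.cast_natCast (R := ℝ) p.1, ← Int.cast_natCast (R := ℝ) p.2,
    ← Int.cast_natCast (R := ℝ) q.1, ← Int.cast_natCast (R := ℝ) q.2, hp₁, hp₂]
  rcases hl with ⟨hq₁, hq₂⟩ | ⟨hq₁, hq₂⟩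
  · rw [hq₁, hq₂]
    exact deviation_sub_notMem_Ioo hk hi l m
  · rw [hq₁, hq₂]
    rcases l.eq_zero_or_pos with rfl | hl
    · simpa only [aSeq_zero, bSeq_zero] using deviation_sub_notMem_Ioo hk hi 0 m
    · have hik' : (i : ℝ) < k := mod_cast hik
      exact fun h ↦ (hik'.trans_le (le_deviation_sub_swap hk hl m)).not_gt h.2

theorem GammaMove.notMem_SbarK (hk : 1 ≤ k) {p q : ℕ × ℕ} {m : ℕ} (hp₁ : (p.1 : ℤ) = aSeq k m)
    (hp₂ : (p.2 : ℤ) = bSeq k m) (h : GammaMove k p q) : q ∉ SbarK k := by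
  intro hq
  obtain ⟨hfst, hsnd⟩ := fst_lt_and_add_le_of_mem_SbarK hk hp₁ hp₂ hq h.lt
  obtain ⟨i, n, hi, hik, hn, hf, hg⟩ := h.exists_fg hfst hsnd
  refine deviation_sub_notMem_Ioo_of_mem_SbarK hi hik hp₁ hp₂ hq ?_
  have hf' : (p.1 : ℝ) - q.1 = (fg k i n).1 := by
    rw [← hf]
    push_cast
    ring
  have hg' : (p.2 : ℝ) - q.2 = (fg k i n).2 - 1 := by
    have : (q.2 : ℝ) + (fg k i n).2 = p.2 + 1 := mod_cast hg
    linarith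
  obtain ⟨hlower, hupper⟩ := deviation_fg_mem_Ioo hk hik.le (Nat.one_le_iff_ne_zero.mp hn)
  rw [hf', hg']
  unfold deviation at *
  constructor <;> linarith

/-- No legal move of the ruleset Γ_k leads from a position in S̄_k
    to a position in S̄_k. -/
theorem no_move_P_to_P (k : ℕ) (hk : 1 ≤ k) (p q : ℕ × ℕ)
    (hp : p ∈ SbarK k) (hmove : GammaMove k p q) : q ∉ SbarK k := by
  obtain ⟨m, ⟨hp₁, hp₂⟩ | ⟨hp₁, hp₂⟩⟩ := hp
  · exact hmove.notMem_SbarK hk hp₁ hp₂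
  · rw [← swap_mem_SbarK]
    exact hmove.swap.notMem_SbarK hk hp₂ hp₁
end

section
/- Let k ≥ 2 be an integer, α = (1+√(1+4/k))/2, β = kα+1, b_n = ⌊nβ⌋, d_n = b_n − b_{n−1}. Fix i ∈ {1,…,k−1} and n ≥ 0. Suppose m ≥ 0 satisfies m + g^i_{n+1} < g^i_{n+2} (so the block of positions (m, m+g^i_{n+1}] is a factor of the prefix of length g^i_{n+2} which is not its suffix), and the position p = m + g^i_{n+1} satisfies d_p = k+2 and #{j : 1 ≤ j ≤ p, d_j = k+2} ≡ i (mod k) (i.e., the block ends with the letter τ_i). Then the number of indices j with m < j ≤ m + g^i_{n+1} and d_j = k+1 equals exactly g^i_n. -/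
/-- c_n = a_n − a_{n−1} (used for n ≥ 1) -/
noncomputable def cSeq (k n : ℕ) : ℤ := aSeq k n - aSeq k (n - 1)

/-- d_n = b_n − b_{n−1} (used for n ≥ 1) -/
noncomputable def dSeq (k n : ℕ) : ℤ := bSeq k n - bSeq k (n - 1)

/-!
Write `β = k + 1 + θ`, so that `0 < θ < 1`, `θ² + kθ = k`, and the first `p` letters contain
`⌊pθ⌋` letters `τ`. If this number is `kq + i`, then the fractional part of `pθ` is the defect
`δ(p, q) = pθ - kq - i`. The recursion `(q, p) ↦ (q + p, kq + (k + 1)p + i)` of `(f, g)` multiplies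
defects by `1 - θ`, and it can be undone at every pair with `p > 0` and nonnegative defect. By
descent, `(g_{n+1}, f_{n+1})` is therefore the least pair with `p > 0` whose defect is nonnegative
and smaller than that of `(g_n, f_n)`.

A prefix of length `p = m + g_{n+1} < g_{n+2}` with `kq + i` letters `τ` thus has a defect at least
that of `(g_{n+1}, f_{n+1})`. Subtracting `g_{n+1}θ` from `pθ` causes no borrow, so the last
`g_{n+1}` letters of this prefix contain `k f_{n+1} + i = g_{n+1} - g_n` letters `τ`.
-/

/-- The density `θ = β - (k + 1)` of the letter `τ` in the infinite word. -/
noncomputable def tauDensity (k : ℕ) : ℝ := betaK k - (k + 1)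

/-- The number of letters `τ` among the first `p` letters. -/
noncomputable def tauCount (k p : ℕ) : ℕ :=
  ((Finset.Icc 1 p).filter (fun j => dSeq k j = (k : ℤ) + 2)).card

/-- The defect `δ(p, q) = pθ - kq - i`, by which `pθ` exceeds the number `kq + i` of letters `τ`.
The arguments are integers because undoing the recursion at `(0, i + 1)` leads to `q = -1`. -/
noncomputable def defect (k i : ℕ) (p q : ℤ) : ℝ := p * tauDensity k - k * q - i

section TauDensity

variable {k : ℕ}

lemma tauDensity_sq_add_mul_self (hk : 0 < k) : tauDensity k ^ 2 + k * tauDensity k = k := by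
  have hk' : (k : ℝ) ≠ 0 := Nat.cast_ne_zero.mpr hk.ne'
  have hsqrt : (k : ℝ) * √(1 + 4 / k) ^ 2 = k + 4 := by
    rw [Real.sq_sqrt (by positivity), mul_add, mul_one, mul_div_cancel₀ _ hk']
  unfold tauDensity betaK alphaK
  linear_combination (k : ℝ) / 4 * hsqrt

lemma tauDensity_pos (hk : 0 < k) : 0 < tauDensity k := by
  have hk' : (0 : ℝ) < k := by exact_mod_cast hk
  have hsqrt : 1 < √(1 + 4 / (k : ℝ)) := by
    rw [Real.lt_sqrt zero_le_one, one_pow]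
    exact lt_add_of_pos_right 1 (by positivity)
  unfold tauDensity betaK alphaK
  linarith [mul_lt_mul_of_pos_left hsqrt hk']

lemma tauDensity_lt_one (hk : 0 < k) : tauDensity k < 1 := by
  have hk' : (0 : ℝ) < k := by exact_mod_cast hk
  have hsq : 0 < tauDensity k ^ 2 := pow_pos (tauDensity_pos hk) 2
  refine lt_of_mul_lt_mul_left ?_ hk'.le
  linarith [tauDensity_sq_add_mul_self hk]

end TauDensity

section Counting

variable {k : ℕ}

lemma bSeq_eq_add_floor (k p : ℕ) : bSeq k p = p * (k + 1) + ⌊(p : ℝ) * tauDensity k⌋ := by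
  have hsplit : (p : ℝ) * betaK k = ((p * (k + 1) : ℤ) : ℝ) + p * tauDensity k := by
    unfold tauDensity
    push_cast
    ring
  rw [bSeq, hsplit, Int.floor_intCast_add]

lemma dSeq_add_one (k p : ℕ) :
    dSeq k (p + 1) =
      k + 1 + (⌊((p + 1 : ℕ) : ℝ) * tauDensity k⌋ - ⌊(p : ℝ) * tauDensity k⌋) := by
  rw [dSeq, Nat.add_sub_cancel, bSeq_eq_add_floor, bSeq_eq_add_floor]
  push_cast
  ring

lemma dSeq_add_one_eq_or (hk : 0 < k) (p : ℕ) :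
    dSeq k (p + 1) = k + 1 ∨ dSeq k (p + 1) = k + 2 := by
  have hfloor : ⌊tauDensity k⌋ = 0 :=
    Int.floor_eq_zero_iff.mpr ⟨(tauDensity_pos hk).le, tauDensity_lt_one hk⟩
  have hlower := Int.le_floor_add ((p : ℝ) * tauDensity k) (tauDensity k)
  have hupper := Int.le_floor_add_floor ((p : ℝ) * tauDensity k) (tauDensity k)
  rw [dSeq_add_one, Nat.cast_add_one, add_one_mul]
  omega

lemma tauCount_add_one (k p : ℕ) :
    tauCount k (p + 1) = tauCount k p + if dSeq k (p + 1) = k + 2 then 1 else 0 := by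
  rw [tauCount, ← Finset.insert_Icc_right_eq_Icc_add_one (by omega), Finset.filter_insert]
  split_ifs
  · rw [Finset.card_insert_of_notMem (by simp), tauCount]
  · rfl

lemma tauCount_eq_floor (hk : 0 < k) (p : ℕ) : (tauCount k p : ℤ) = ⌊(p : ℝ) * tauDensity k⌋ := by
  induction p with
  | zero => simp [tauCount]
  | succ p ih =>
    have hstep := dSeq_add_one k p
    rw [tauCount_add_one]
    rcases dSeq_add_one_eq_or hk p with hσ | hτ
    · rw [if_neg (by omega)]
      omega
    · rw [if_pos hτ]
      omega

lemma tauCount_eq_iff (hk : 0 < k) {p : ℕ} {c : ℤ} :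
    (tauCount k p : ℤ) = c ↔ (c : ℝ) ≤ p * tauDensity k ∧ (p : ℝ) * tauDensity k < c + 1 := by
  rw [tauCount_eq_floor hk, Int.floor_eq_iff]

lemma card_sigma_Ioc_add_tauCount (hk : 0 < k) (m l : ℕ) :
    ((Finset.Ioc m (m + l)).filter (fun j => dSeq k j = (k : ℤ) + 1)).card + tauCount k (m + l) =
      l + tauCount k m := by
  induction l with
  | zero => simp
  | succ l ih =>
    rw [← add_assoc, ← Finset.insert_Ioc_right_eq_Ioc_add_one (by omega), Finset.filter_insert,
      tauCount_add_one]
    rcases dSeq_add_one_eq_or hk (m + l) with hσ | hτ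
    · rw [if_pos hσ, if_neg (by omega), Finset.card_insert_of_notMem (by simp)]
      omega
    · rw [if_neg (by omega), if_pos hτ]
      omega

end Counting

section Defect

variable {k i : ℕ}

lemma defect_recursion (hk : 0 < k) (i : ℕ) (p q : ℤ) :
    defect k i (k * q + (k + 1) * p + i) (q + p) = (1 - tauDensity k) * defect k i p q := by
  simp only [defect]
  push_cast
  linear_combination (p : ℝ) * tauDensity_sq_add_mul_self hk

lemma exists_eq_recursion_of_defect_nonneg (hk : 0 < k) {p q : ℤ} (hp : 0 < p)
    (hδ : 0 ≤ defect k i p q) :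
    ∃ p' q' : ℤ, 0 < p' ∧ p = k * q' + (k + 1) * p' + i ∧ q = q' + p' := by
  refine ⟨p - k * q - i, q - (p - k * q - i), ?_, by ring, by ring⟩
  have hp' : (0 : ℝ) < p := by exact_mod_cast hp
  have hlt : (p : ℝ) * tauDensity k < p := mul_lt_of_lt_one_right hp' (tauDensity_lt_one hk)
  have hpos : (0 : ℝ) < p - k * q - i := by
    unfold defect at hδ
    linarith
  exact_mod_cast hpos

lemma defect_fg_zero (hk : 0 < k) (i : ℕ) :
    defect k i (fg k i 0).2 (fg k i 0).1 = (1 - tauDensity k) * defect k i 1 (-1) := by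
  rw [← defect_recursion hk]
  congr 1
  simp only [fg]
  push_cast
  ring

lemma defect_fg_succ (hk : 0 < k) (i n : ℕ) :
    defect k i (fg k i (n + 1)).2 (fg k i (n + 1)).1 =
      (1 - tauDensity k) * defect k i (fg k i n).2 (fg k i n).1 := by
  rw [← defect_recursion hk]
  simp only [fg]
  push_cast
  rfl

lemma defect_fg_pos (hik : i < k) (n : ℕ) : 0 < defect k i (fg k i n).2 (fg k i n).1 := by
  have hk : 0 < k := by omega
  have hθ : 0 < 1 - tauDensity k := sub_pos.mpr (tauDensity_lt_one hk)
  induction n with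
  | zero =>
    rw [defect_fg_zero hk]
    refine mul_pos hθ ?_
    have hik' : (i : ℝ) < k := by exact_mod_cast hik
    have hθ₀ := tauDensity_pos hk
    simp only [defect]
    push_cast
    linarith
  | succ n ih =>
    rw [defect_fg_succ hk]
    exact mul_pos hθ ih

lemma nonneg_and_lt_of_defect_lt (hk : 0 < k) {p q : ℤ} (hp : 0 < p)
    (hδ : 0 ≤ defect k i p q) (hlt : defect k i p q < defect k i 1 (-1)) :
    0 ≤ q ∧ i < p := by
  have hk' : (0 : ℝ) < k := by exact_mod_cast hk
  have hp' : (1 : ℝ) ≤ p := by exact_mod_cast hp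
  simp only [defect] at hδ hlt
  push_cast at hlt
  have hq : 0 ≤ q := by
    have hθp : tauDensity k ≤ p * tauDensity k := le_mul_of_one_le_left (tauDensity_pos hk).le hp'
    have hkq : (k : ℝ) * (-1) < k * q := by linarith
    have hq' : (-1 : ℝ) < q := lt_of_mul_lt_mul_left hkq hk'.le
    exact_mod_cast hq'
  have hkq : (0 : ℝ) ≤ k * q := mul_nonneg hk'.le (by exact_mod_cast hq)
  have hpθ : (p : ℝ) * tauDensity k < p :=
    mul_lt_of_lt_one_right (by linarith) (tauDensity_lt_one hk)
  have hip : (i : ℝ) < p := by linarith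
  exact ⟨hq, by exact_mod_cast hip⟩

-- The factor `1 - θ` turns `δ(g_n, f_n)` into a bound by the defect one step of the recursion
-- earlier, which also covers `n = 0`.
lemma fg_le_of_defect_lt (hk : 0 < k) (n : ℕ) {p q : ℤ} (hp : 0 < p) (hδ : 0 ≤ defect k i p q)
    (hlt : (1 - tauDensity k) * defect k i p q < defect k i (fg k i n).2 (fg k i n).1) :
    (fg k i n).1 ≤ q ∧ (fg k i n).2 ≤ p := by
  have hθ : 0 < 1 - tauDensity k := sub_pos.mpr (tauDensity_lt_one hk)
  induction n generalizing p q with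
  | zero =>
    rw [defect_fg_zero hk] at hlt
    obtain ⟨hq, hip⟩ := nonneg_and_lt_of_defect_lt hk hp hδ (lt_of_mul_lt_mul_left hlt hθ.le)
    exact ⟨by simpa [fg] using hq, by simpa [fg] using hip⟩
  | succ n ih =>
    obtain ⟨p', q', hp', rfl, rfl⟩ := exists_eq_recursion_of_defect_nonneg hk hp hδ
    rw [defect_recursion hk] at hδ hlt
    rw [defect_fg_succ hk] at hlt
    obtain ⟨hf, hg⟩ :=
      ih hp' (nonneg_of_mul_nonneg_right hδ hθ) (lt_of_mul_lt_mul_left hlt hθ.le)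
    simp only [fg]
    push_cast
    exact ⟨by gcongr, by gcongr⟩

end Defect

section Factor

variable {k i : ℕ}

lemma fg_snd_add_one (k i n : ℕ) :
    (fg k i (n + 1)).2 = (fg k i n).2 + (k * (fg k i (n + 1)).1 + i) := by
  simp only [fg]
  ring

lemma fg_snd_pos (k i n : ℕ) : 0 < (fg k i n).2 := by
  induction n with
  | zero => exact Nat.succ_pos i
  | succ n ih => exact ih.trans_le (fg_snd_add_one k i n ▸ Nat.le_add_right _ _)

lemma defect_fg_le_of_lt_fg_succ (hk : 0 < k) (n : ℕ) {p q : ℤ} (hp : 0 < p)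
    (hδ : 0 ≤ defect k i p q) (hlt : p < (fg k i (n + 1)).2) :
    defect k i (fg k i n).2 (fg k i n).1 ≤ defect k i p q := by
  by_contra! hsmall
  refine hlt.not_ge (fg_le_of_defect_lt hk (n + 1) hp hδ ?_).2
  rw [defect_fg_succ hk]
  exact mul_lt_mul_of_pos_left hsmall (sub_pos.mpr (tauDensity_lt_one hk))

lemma exists_eq_mul_add_of_modEq {c : ℕ} (hik : i < k) (h : c ≡ i [MOD k]) :
    ∃ q, c = k * q + i :=
  ⟨c / k, by rw [← Nat.mod_eq_of_lt hik, ← h, Nat.div_add_mod]⟩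

lemma tauCount_add_fg (hik : i < k) (n m : ℕ)
    (hlt : m + (fg k i n).2 < (fg k i (n + 1)).2)
    (hmod : tauCount k (m + (fg k i n).2) ≡ i [MOD k]) :
    tauCount k (m + (fg k i n).2) = tauCount k m + (k * (fg k i n).1 + i) := by
  have hk : 0 < k := by omega
  obtain ⟨q, hq⟩ := exists_eq_mul_add_of_modEq hik hmod
  zify at hq ⊢
  obtain ⟨hlower, hupper⟩ := (tauCount_eq_iff hk).mp hq
  push_cast at hlower hupper
  have hp : (0 : ℤ) < m + (fg k i n).2 := by
    have hg := fg_snd_pos k i n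
    omega
  have hδ : 0 ≤ defect k i (m + (fg k i n).2) q := by
    simp only [defect]
    push_cast
    linarith
  have hle := defect_fg_le_of_lt_fg_succ hk n hp hδ (by exact_mod_cast hlt)
  have hpos := defect_fg_pos hik n
  have hm : (tauCount k m : ℤ) = k * q - k * (fg k i n).1 := by
    simp only [defect] at hle hpos
    rw [tauCount_eq_iff hk]
    push_cast at hle hpos ⊢
    constructor <;> linarith
  linarith

end Factor

-- The case `i = 0` concerns the letter `τ_k`.
theorem factor_ending_tau_i_general (k i : ℕ) (hik : i < k) (n m : ℕ)
    (hlt : m + (fg k i (n + 1)).2 < (fg k i (n + 2)).2)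
    (hmod : tauCount k (m + (fg k i (n + 1)).2) ≡ i [MOD k]) :
    ((Finset.Ioc m (m + (fg k i (n + 1)).2)).filter
        (fun j => dSeq k j = (k : ℤ) + 1)).card = (fg k i n).2 := by
  have hσ := card_sigma_Ioc_add_tauCount (by omega : 0 < k) m (fg k i (n + 1)).2
  have hτ := tauCount_add_fg hik (n + 1) m hlt hmod
  have hg := fg_snd_add_one k i n
  omega

/-- A factor of length g^i_{n+1} of the prefix of length g^i_{n+2} which is
    not its suffix and which ends with the letter τ_i contains exactly g^i_n
    indices j with d_j = k+1. -/
theorem factor_ending_tau_i (k : ℕ) (hk : 2 ≤ k) (i : ℕ) (hi1 : 1 ≤ i)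
    (hik : i ≤ k - 1) (n m : ℕ)
    (hlt : m + (fg k i (n + 1)).2 < (fg k i (n + 2)).2)
    (hd : dSeq k (m + (fg k i (n + 1)).2) = (k : ℤ) + 2)
    (hmod : ((Finset.Icc 1 (m + (fg k i (n + 1)).2)).filter
        (fun j => dSeq k j = (k : ℤ) + 2)).card ≡ i [MOD k]) :
    ((Finset.Ioc m (m + (fg k i (n + 1)).2)).filter
        (fun j => dSeq k j = (k : ℤ) + 1)).card = (fg k i n).2 :=
  factor_ending_tau_i_general k i (by omega) n m hlt hmod
end

section
/- Let k ≥ 1 be an integer, α = (1+√(1+4/k))/2, β = kα+1, a_n = ⌊nα⌋, b_n = ⌊nβ⌋, and let δ_n = b_n − a_n denote the gap of the n-th P-position. Then for every n ≥ 1, δ_n − δ_{n−1} ∈ {k, k+1}. -/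
section Floor

variable {R : Type*} [CommRing R] [LinearOrder R] [IsStrictOrderedRing R] [FloorRing R]

lemma floor_add_eq_or_eq_add_one (x : R) {t : R} (ht₀ : 0 ≤ t) (ht₁ : t ≤ 1) :
    ⌊x + t⌋ = ⌊x⌋ ∨ ⌊x + t⌋ = ⌊x⌋ + 1 := by
  have lower : ⌊x⌋ ≤ ⌊x + t⌋ := Int.floor_mono (le_add_of_nonneg_right ht₀)
  have upper : ⌊x + t⌋ ≤ ⌊x⌋ + 1 := by
    rw [← Int.floor_add_one]
    gcongr
  omega

lemma floor_natCast_mul_lt_floor_natCast_mul {k : ℕ} (hk : 0 < k) {x y : R} (h : ⌊x⌋ < ⌊y⌋) :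
    ⌊k * x⌋ < ⌊k * y⌋ := by
  have left : ⌊k * x⌋ < k * ⌊y⌋ := by
    rw [Int.floor_lt]
    push_cast
    gcongr
    exact Int.floor_lt.mp h
  have right : k * ⌊y⌋ ≤ ⌊k * y⌋ := by
    rw [Int.le_floor]
    push_cast
    gcongr
    exact Int.floor_le y
  exact left.trans_le right

lemma floor_natCast_mul_sub_floor_add_eq_or_eq_add_one {k : ℕ} (hk : 0 < k) (x : R) {t : R}
    (ht : 0 ≤ t) (hkt : k * t ≤ 1) :
    ⌊k * (x + t)⌋ - ⌊x + t⌋ = ⌊k * x⌋ - ⌊x⌋ ∨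
      ⌊k * (x + t)⌋ - ⌊x + t⌋ = ⌊k * x⌋ - ⌊x⌋ + 1 := by
  have ht₁ : t ≤ 1 := (le_mul_of_one_le_left ht (mod_cast hk)).trans hkt
  have step := floor_add_eq_or_eq_add_one x ht ht₁
  have step_mul := floor_add_eq_or_eq_add_one (k * x) (by positivity) hkt
  rw [← mul_add] at step_mul
  have jump : ⌊x⌋ < ⌊x + t⌋ → ⌊k * x⌋ < ⌊k * (x + t)⌋ :=
    floor_natCast_mul_lt_floor_natCast_mul hk
  omega

lemma floor_mul_sub_floor_mul_eq (k n : ℕ) (α : R) :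
    ⌊n * (k * α + 1)⌋ - ⌊n * α⌋ = n * k + (⌊k * (n * (α - 1))⌋ - ⌊n * (α - 1)⌋) := by
  have hβ : (n : R) * (k * α + 1) = k * (n * (α - 1)) + (n * k + n : ℕ) := by push_cast; ring
  have hα : (n : R) * α = n * (α - 1) + n := by ring
  rw [hβ, hα, Int.floor_add_natCast, Int.floor_add_natCast]
  push_cast
  ring

theorem gap_difference_general {k : ℕ} (hk : 1 ≤ k) {n : ℕ} (hn : 1 ≤ n) {α : R} (hα : 1 ≤ α)
    (hkα : k * (α - 1) ≤ 1) :
    (⌊n * (k * α + 1)⌋ - ⌊n * α⌋) -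
        (⌊((n - 1 : ℕ) : R) * (k * α + 1)⌋ - ⌊((n - 1 : ℕ) : R) * α⌋) = (k : ℤ) ∨
      (⌊n * (k * α + 1)⌋ - ⌊n * α⌋) -
        (⌊((n - 1 : ℕ) : R) * (k * α + 1)⌋ - ⌊((n - 1 : ℕ) : R) * α⌋) = (k : ℤ) + 1 := by
  obtain ⟨m, rfl⟩ := Nat.exists_eq_add_of_le' hn
  have step := floor_natCast_mul_sub_floor_add_eq_or_eq_add_one hk (m * (α - 1))
    (sub_nonneg.mpr hα) hkα
  rw [Nat.add_sub_cancel, floor_mul_sub_floor_mul_eq, floor_mul_sub_floor_mul_eq]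
  push_cast
  rw [add_one_mul (m : R), add_one_mul (m : ℤ)]
  omega

end Floor

lemma one_le_alphaK (k : ℕ) : 1 ≤ alphaK k := by
  have one_le_sqrt : 1 ≤ √(1 + 4 / (k : ℝ)) :=
    Real.one_le_sqrt.mpr (le_add_of_nonneg_right (by positivity))
  unfold alphaK
  linarith

lemma alphaK_le_one_add_inv (k : ℕ) : alphaK k ≤ 1 + (k : ℝ)⁻¹ := by
  have sqrt_le : √(1 + 4 / (k : ℝ)) ≤ 1 + 2 * (k : ℝ)⁻¹ := by
    refine Real.sqrt_le_iff.mpr ⟨by positivity, ?_⟩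
    rw [div_eq_mul_inv]
    linarith [sq_nonneg (k : ℝ)⁻¹]
  unfold alphaK
  linarith

lemma natCast_mul_alphaK_sub_one_le_one (k : ℕ) : k * (alphaK k - 1) ≤ 1 :=
  calc k * (alphaK k - 1) ≤ k * (k : ℝ)⁻¹ := by
        gcongr
        linarith [alphaK_le_one_add_inv k]
    _ ≤ 1 := mul_inv_le_one

/-- The gaps δ_n = b_n − a_n satisfy δ_n − δ_{n−1} ∈ {k, k+1} for n ≥ 1. -/
theorem gap_difference (k : ℕ) (hk : 1 ≤ k) (n : ℕ) (hn : 1 ≤ n) :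
    (bSeq k n - aSeq k n) - (bSeq k (n - 1) - aSeq k (n - 1)) = (k : ℤ) ∨
    (bSeq k n - aSeq k n) - (bSeq k (n - 1) - aSeq k (n - 1)) = (k : ℤ) + 1 :=
  gap_difference_general hk hn (one_le_alphaK k) (natCast_mul_alphaK_sub_one_le_one k)
end
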